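/- For every natural number n and every B in {3, 9, 18, 39}, the number of 400-regular partitions satisfies b_400(1125n + 25B − 26) ≡ p_9(45n + B) (mod 2). -/

import Mathlib

/-- The number of `m`-regular partitions of `n`, i.e. partitions of `n`
in which no part is divisible by `m`. -/
noncomputable def numRegularPartitions (m n : ℕ) : ℕ :=
  Nat.card {π : n.Partition // ∀ j ∈ π.parts, ¬ m ∣ j}

/-- The number of `t`-multipartitions of `n`, i.e. `t`-tuples of partitions
whose sizes sum to `n`. -/
noncomputable def numMultipartitions (t n : ℕ) : ℕ :=
  Nat.card {f : Fin t → Σ k : ℕ, k.Partition // (∑ i, (f i).1) = n}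

/-!
Modulo 2 write `fₘ = ∏ (1 - q ^ (m n))`, so that `∑ p(n) q ^ n = 1 / f₁` and, since
`400 = 25 · 2 ^ 4`, `∑ b₄₀₀(n) q ^ n = f₂₅ ^ 16 / f₁`. Involutions of `ℤ × ℤ` preserving a quadratic
form give `f₁ ^ 3 = ∑ q ^ (k (2 k - 1))` and `f₁ f₅ = f₁ ^ 6 + q f₅ ^ 6`. Extracting the exponents
in residue classes modulo 5 from multiples of the second identity yields
`q ∑ p(5 n + 4) q ^ n = 1 / f₁ ^ 5 + 1 / f₅` and, after a second round,
`q ^ 2 ∑ p(25 n + 24) q ^ n = 1 / f₁ ^ 25 + 1 / f₅ ^ 5 + q / f₁`. Multiplying by `f₁ ^ 16`,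
`q ^ 2 ∑ b₄₀₀(25 n + 24) q ^ n = 1 / f₁ ^ 9 + f₁ ^ 16 / f₅ ^ 5 + q f₁ ^ 15`.
The exponents of `f₁ ^ 16` avoid the classes 3 and 4 modulo 5, and those of
`f₁ ^ 15 = f₁ ^ 3 (f₁ ^ 3) ^ 4` avoid 2 and 8 modulo 9; for exponents `45 n + B` only
`1 / f₁ ^ 9 = ∑ p₉(n) q ^ n` survives.
-/

open PowerSeries
open Finset.HasAntidiagonal (antidiagonal mem_antidiagonal)

section FiberSeries

variable {ι κ μ : Type*}

/-- The counting generating function `∑ i, q ^ w i` of a family weighted by `w : ι → ℕ`.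
An infinite fibre of `w` contributes the coefficient `0`. -/
noncomputable def fiberSeries (R : Type*) [CommRing R] (w : ι → ℕ) : R⟦X⟧ :=
  mk fun n => (Nat.card {i // w i = n} : R)

/-- Each value of the weight `w` is attained finitely often, so that `fiberSeries R w` is a
genuine generating function. -/
def FiniteFibers (w : ι → ℕ) : Prop :=
  ∀ n, Finite {i // w i = n}

theorem finiteFibers_of_injective {w : ι → ℕ} (hw : Function.Injective w) : FiniteFibers w :=
  fun _ => Finite.of_injective (β := Unit) (fun _ => ()) fun i j _ =>
    Subtype.ext <| hw <| i.2.trans j.2.symm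

theorem FiniteFibers.comp_injective {w : ι → ℕ} (hw : FiniteFibers w) {f : κ → ι}
    (hf : Function.Injective f) : FiniteFibers fun j => w (f j) := fun n =>
  have := hw n
  Finite.of_injective (Subtype.map (q := fun i => w i = n) f fun _ => id)
    (Subtype.map_injective _ hf)

theorem FiniteFibers.const_mul {w : ι → ℕ} (hw : FiniteFibers w) {a : ℕ} (ha : a ≠ 0) :
    FiniteFibers fun i => a * w i := fun n =>
  have := hw (n / a)
  Finite.of_injective
    (Subtype.map (q := fun i => w i = n / a) id fun _ h =>
      Nat.eq_div_of_mul_eq_right ha h)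
    (Subtype.map_injective _ Function.injective_id)

/-- Pairs of total weight `n` correspond to a splitting of `n` and an entry of each weight. -/
def addFiberEquiv (w : ι → ℕ) (v : κ → ℕ) (n : ℕ) :
    {p : ι × κ // w p.1 + v p.2 = n} ≃
      Σ a : antidiagonal n, {i // w i = a.1.1} × {j // v j = a.1.2} where
  toFun p := ⟨⟨(w p.1.1, v p.1.2), mem_antidiagonal.2 p.2⟩, ⟨p.1.1, rfl⟩, ⟨p.1.2, rfl⟩⟩
  invFun q := ⟨(q.2.1.1, q.2.2.1), by
    rw [q.2.1.2, q.2.2.2]; exact mem_antidiagonal.1 q.1.2⟩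
  left_inv _ := rfl
  right_inv := by
    rintro ⟨⟨⟨a, b⟩, hab⟩, ⟨i, hi⟩, ⟨j, hj⟩⟩
    dsimp only at hi hj
    subst hi hj
    rfl

theorem FiniteFibers.add {w : ι → ℕ} {v : κ → ℕ} (hw : FiniteFibers w) (hv : FiniteFibers v) :
    FiniteFibers fun p : ι × κ => w p.1 + v p.2 := fun n =>
  have (a : antidiagonal n) : Finite ({i // w i = a.1.1} × {j // v j = a.1.2}) :=
    have := hw a.1.1; have := hv a.1.2; inferInstance
  Finite.of_equiv _ (addFiberEquiv w v n).symm

theorem FiniteFibers.sum {w : ι → ℕ} (hw : FiniteFibers w) (t : ℕ) :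
    FiniteFibers fun f : Fin t → ι => ∑ i, w (f i) := by
  induction t with
  | zero => exact fun _ => inferInstance
  | succ t ih =>
    simp only [Fin.sum_univ_succ]
    exact (hw.add ih).comp_injective (Fin.consEquiv fun _ => ι).symm.injective

variable {R : Type*} [CommRing R]

theorem coeff_fiberSeries (w : ι → ℕ) (n : ℕ) :
    coeff n (fiberSeries R w) = (Nat.card {i // w i = n} : R) :=
  coeff_mk _ _

theorem coeff_fiberSeries_eq_zero {w : ι → ℕ} {n : ℕ} (h : ∀ i, w i ≠ n) :
    coeff n (fiberSeries R w) = 0 := by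
  have : IsEmpty {i // w i = n} := ⟨fun i => h i i.2⟩
  rw [coeff_fiberSeries, Nat.card_of_isEmpty, Nat.cast_zero]

theorem fiberSeries_comp_equiv (e : κ ≃ ι) (w : ι → ℕ) :
    fiberSeries R (fun j => w (e j)) = fiberSeries R w := by
  ext n
  rw [coeff_fiberSeries, coeff_fiberSeries,
    Nat.card_congr (e.subtypeEquiv (q := fun i => w i = n) fun _ => Iff.rfl)]

theorem fiberSeries_mul {w : ι → ℕ} {v : κ → ℕ} (hw : FiniteFibers w) (hv : FiniteFibers v) :
    fiberSeries R w * fiberSeries R v = fiberSeries R fun p : ι × κ => w p.1 + v p.2 := by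
  ext n
  have (a : antidiagonal n) : Finite ({i // w i = a.1.1} × {j // v j = a.1.2}) :=
    have := hw a.1.1; have := hv a.1.2; inferInstance
  rw [coeff_mul, coeff_fiberSeries, Nat.card_congr (addFiberEquiv w v n), Nat.card_sigma,
    Nat.cast_sum, Finset.sum_coe_sort _ fun a : ℕ × ℕ =>
      (Nat.card ({i // w i = a.1} × {j // v j = a.2}) : R)]
  simp only [coeff_fiberSeries, Nat.card_prod, Nat.cast_mul]

theorem fiberSeries_pow {w : ι → ℕ} (hw : FiniteFibers w) (t : ℕ) :
    fiberSeries R w ^ t = fiberSeries R fun f : Fin t → ι => ∑ i, w (f i) := by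
  induction t with
  | zero =>
    ext n
    rcases n.eq_zero_or_pos with rfl | hn
    · simp [coeff_fiberSeries]
    · simp [coeff_fiberSeries, coeff_one, hn.ne, hn.ne']
  | succ t ih =>
    rw [pow_succ', ih, fiberSeries_mul hw (hw.sum t),
      ← fiberSeries_comp_equiv (Fin.consEquiv fun _ => ι).symm]
    simp only [Fin.sum_univ_succ]
    rfl

theorem fiberSeries_eq_add {w : ι → ℕ} (hw : FiniteFibers w) {f : κ → ι} {g : μ → ι}
    (h : Function.Bijective (Sum.elim f g)) :
    fiberSeries R w = fiberSeries R (fun j => w (f j)) + fiberSeries R fun j => w (g j) := by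
  ext n
  have : Finite {j // w (f j) = n} := hw.comp_injective (h.injective.comp Sum.inl_injective) n
  have : Finite {j // w (g j) = n} := hw.comp_injective (h.injective.comp Sum.inr_injective) n
  rw [← fiberSeries_comp_equiv (Equiv.ofBijective _ h), map_add]
  simp only [coeff_fiberSeries, Equiv.ofBijective_apply, Nat.card_congr Equiv.subtypeSum,
    Sum.elim_inl, Sum.elim_inr, Nat.card_sum, Nat.cast_add]

theorem expand_fiberSeries {m : ℕ} (hm : m ≠ 0) (w : ι → ℕ) :
    expand m hm (fiberSeries R w) = fiberSeries R fun i => m * w i := by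
  ext n
  rw [coeff_expand]
  split_ifs with h
  · obtain ⟨n, rfl⟩ := h
    simp only [coeff_fiberSeries, Nat.mul_div_cancel_left n (Nat.pos_of_ne_zero hm),
      mul_right_inj' hm]
  · exact (coeff_fiberSeries_eq_zero fun i hi => h ⟨_, hi.symm⟩).symm

theorem X_mul_fiberSeries (w : ι → ℕ) :
    X * fiberSeries R w = fiberSeries R fun i => w i + 1 := by
  ext (_ | n)
  · simp [coeff_fiberSeries]
  · simp only [coeff_succ_X_mul, coeff_fiberSeries, Nat.add_right_cancel_iff]

theorem fiberSeries_eq_of_involutive {w : ι → ℕ} (hw : FiniteFibers w) {σ : ι → ι}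
    (hσ : Function.Involutive σ) (hwσ : ∀ i, w (σ i) = w i) {f : κ → ι}
    (hf : Function.Injective f) (hfix : ∀ i, σ i = i ↔ i ∈ Set.range f) :
    fiberSeries (ZMod 2) w = fiberSeries (ZMod 2) fun j => w (f j) := by
  classical
  ext n
  have := hw n
  have := Fintype.ofFinite {i // w i = n}
  let τ : Function.End {i // w i = n} := Subtype.map σ fun i hi => (hwσ i).trans hi
  have hτ : τ ^ 2 ^ 1 = 1 := funext fun i => Subtype.ext (hσ i)
  let e : {j // w (f j) = n} → τ.fixedPoints := fun j =>
    ⟨⟨f j, j.2⟩, Subtype.ext ((hfix _).2 ⟨_, rfl⟩)⟩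
  have he : Function.Bijective e := by
    refine ⟨fun i j hij => ?_, fun ⟨⟨i, hi⟩, hτi⟩ => ?_⟩
    · exact Subtype.ext (hf (Subtype.ext_iff.1 (Subtype.ext_iff.1 hij)))
    · obtain ⟨j, rfl⟩ := (hfix i).1 (Subtype.ext_iff.1 hτi)
      exact ⟨⟨j, hi⟩, rfl⟩
  rw [coeff_fiberSeries, coeff_fiberSeries, Nat.card_eq_of_bijective e he,
    ZMod.natCast_eq_natCast_iff, Nat.card_eq_fintype_card, Nat.card_eq_fintype_card]
  exact Equiv.Perm.card_fixedPoints_modEq hτ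

end FiberSeries

section Multisection

variable {R : Type*} [CommRing R]

/-- The series `∑ n, aₚₙ₊ᵣ qⁿ` extracted from `∑ n, aₙ qⁿ`. -/
noncomputable def multisection (p r : ℕ) : R⟦X⟧ →ₗ[R] R⟦X⟧ where
  toFun f := mk fun n => coeff (p * n + r) f
  map_add' _ _ := by ext; simp
  map_smul' _ _ := by ext; simp

theorem coeff_multisection (p r n : ℕ) (f : R⟦X⟧) :
    coeff n (multisection p r f) = coeff (p * n + r) f := by
  simp [multisection]

theorem multisection_fiberSeries {ι κ : Type*} {p r : ℕ} {w : ι → ℕ} {v : κ → ℕ} {f : κ → ι}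
    (hp : p ≠ 0) (hf : Function.Injective f) (hw : ∀ j, w (f j) = p * v j + r)
    (hrange : ∀ i n, w i = p * n + r → i ∈ Set.range f) :
    multisection p r (fiberSeries R w) = fiberSeries R v := by
  ext n
  have hiff (j : κ) : v j = n ↔ w (f j) = p * n + r := by
    rw [hw, Nat.add_right_cancel_iff, mul_right_inj' hp]
  rw [coeff_multisection, coeff_fiberSeries, coeff_fiberSeries]
  refine congrArg _ (Nat.card_eq_of_bijective
    (Subtype.map (p := fun j => v j = n) f fun j => (hiff j).1)
    ⟨Subtype.map_injective _ hf, fun ⟨i, hi⟩ => ?_⟩).symm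
  obtain ⟨j, rfl⟩ := hrange i n hi
  exact ⟨⟨j, (hiff j).2 hi⟩, rfl⟩

theorem multisection_X_mul (p r : ℕ) (f : R⟦X⟧) :
    multisection p (r + 1) (X * f) = multisection p r f := by
  ext n
  rw [coeff_multisection, coeff_multisection, ← add_assoc, coeff_succ_X_mul]

theorem multisection_zero_X_mul (p : ℕ) (f : R⟦X⟧) :
    multisection (p + 1) 0 (X * f) = X * multisection (p + 1) p f := by
  ext (_ | n)
  · simp [coeff_multisection]
  · rw [coeff_multisection, coeff_succ_X_mul, coeff_multisection,
      show (p + 1) * (n + 1) + 0 = (p + 1) * n + p + 1 by ring, coeff_succ_X_mul]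

theorem multisection_expand_mul {p r : ℕ} (hp : p ≠ 0) (hr : r < p) (f g : R⟦X⟧) :
    multisection p r (expand p hp f * g) = f * multisection p r g := by
  ext n
  rw [coeff_multisection, coeff_mul, coeff_mul]
  symm
  refine Finset.sum_of_injOn (fun a => (p * a.1, p * a.2 + r)) ?_ ?_ ?_ ?_
  · rintro ⟨a, b⟩ - ⟨c, d⟩ - h
    simpa [hp] using h
  · rintro ⟨a, b⟩ h
    simp only [Finset.mem_coe, mem_antidiagonal] at h ⊢
    rw [← h]; ring
  · rintro ⟨a, b⟩ h hab
    rw [coeff_expand_of_not_dvd, zero_mul]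
    rintro ⟨c, rfl⟩
    rw [mem_antidiagonal] at h
    have hcn : c ≤ n := by
      by_contra! hcn
      nlinarith [Nat.mul_le_mul_left p hcn]
    obtain ⟨d, rfl⟩ := Nat.exists_eq_add_of_le hcn
    exact hab ⟨(c, d), by simp, Prod.ext rfl (by dsimp only; linarith)⟩
  · rintro ⟨a, b⟩ -
    rw [coeff_expand_mul, coeff_multisection]

theorem multisection_zero_expand {p : ℕ} (hp : p ≠ 0) (f : R⟦X⟧) :
    multisection p 0 (expand p hp f) = f := by
  ext n
  rw [coeff_multisection, add_zero, coeff_expand_mul]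

theorem multisection_expand_of_coprime {p q r s c : ℕ} (hq : q ≠ 0) (hpq : p.Coprime q)
    (hs : s < p) (h : q * s = p * c + r) (f : R⟦X⟧) :
    multisection p r (expand q hq f) = X ^ c * expand q hq (multisection p s f) := by
  ext n
  rw [coeff_multisection]
  by_cases hn : ∃ l, n = q * l + c
  · obtain ⟨l, rfl⟩ := hn
    rw [coeff_X_pow_mul, coeff_expand_mul, coeff_multisection, ← coeff_expand_mul q hq f]
    congr 2
    linear_combination -h
  · have hleft : ¬ q ∣ p * n + r := by
      rintro ⟨m, hm⟩
      have hqm : q * m ≡ q * s [MOD p] := by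
        rw [← hm, h]
        exact (Nat.mul_add_mod ..).trans (Nat.mul_add_mod ..).symm
      have hms : m % p = s := Nat.mod_eq_of_modEq (hqm.cancel_left_of_coprime hpq) hs
      refine hn ⟨m / p, Nat.eq_of_mul_eq_mul_left (s.zero_le.trans_lt hs) ?_⟩
      have := Nat.div_add_mod m p
      linear_combination hm + h - q * this + q * hms
    have hright (hcn : c ≤ n) : ¬ q ∣ n - c := fun ⟨l, hl⟩ => hn ⟨l, by omega⟩
    rw [coeff_expand_of_not_dvd _ _ _ hleft, coeff_X_pow_mul']
    split_ifs with hcn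
    · rw [coeff_expand_of_not_dvd _ _ _ (hright hcn)]
    · rfl

theorem pow_char_pow_eq_expand (p k : ℕ) [Fact p.Prime] (f : (ZMod p)⟦X⟧) :
    f ^ p ^ k = expand (p ^ k) (pow_ne_zero k (NeZero.ne p)) f := by
  have h := MvPowerSeries.map_iterateFrobenius_expand p (NeZero.ne p) f k
  have hid : iterateFrobenius (ZMod p) p k = RingHom.id _ := Subsingleton.elim _ _
  rw [hid, MvPowerSeries.map_id] at h
  exact h.symm

theorem multisection_pow_char_pow {p r s c ℓ : ℕ} (k : ℕ) [Fact ℓ.Prime] (hpℓ : p.Coprime ℓ)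
    (hs : s < p) (h : ℓ ^ k * s = p * c + r) (f : (ZMod ℓ)⟦X⟧) :
    multisection p r (f ^ ℓ ^ k) = X ^ c * multisection p s f ^ ℓ ^ k := by
  rw [pow_char_pow_eq_expand, pow_char_pow_eq_expand,
    multisection_expand_of_coprime _ (hpℓ.pow_right k) hs h]

end Multisection

local notation "f₁" => pentagonalSeries (ZMod 2)
local notation "f₅" => expand 5 (Nat.succ_ne_zero 4) f₁

section Theta

/-- The `k`-th hexagonal number `k(2k - 1)`, for `k : ℤ`; these are exactly the triangular
numbers. -/
def hexagonal (k : ℤ) : ℕ := (k * (2 * k - 1)).toNat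

theorem natCast_hexagonal (k : ℤ) : (hexagonal k : ℤ) = k * (2 * k - 1) :=
  Int.toNat_of_nonneg <| by rcases le_or_gt k 0 with h | h <;> nlinarith

theorem hexagonal_injective : Function.Injective hexagonal := fun a b h => by
  have h : (a - b) * (2 * (a + b) - 1) = 0 := by
    have := congrArg (Nat.cast : ℕ → ℤ) h
    rw [natCast_hexagonal, natCast_hexagonal] at this
    linear_combination this
  rcases mul_eq_zero.1 h with h | h <;> omega

/-- The theta series `∑ k, q ^ k(2k - 1)` of the hexagonal numbers modulo 2. -/
noncomputable def hexagonalSeries : (ZMod 2)⟦X⟧ := fiberSeries (ZMod 2) hexagonal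

theorem pentagonalSeries_eq_fiberSeries : f₁ = fiberSeries (ZMod 2) pentagonal := by
  ext n
  by_cases h : n ∈ Set.range pentagonal
  · obtain ⟨k, rfl⟩ := h
    have : Unique {i // pentagonal i = pentagonal k} :=
      ⟨⟨⟨k, rfl⟩⟩, fun i => Subtype.ext (pentagonal_injective i.2)⟩
    rw [coeff_pentagonalSeries_pentagonal, coeff_fiberSeries, Nat.card_unique, Nat.cast_one]
    rcases Int.even_or_odd k with hk | hk
    · simp [Int.negOnePow_even _ hk]
    · simp only [Int.negOnePow_odd _ hk]; decide
  · rw [coeff_pentagonalSeries_eq_zero _ h, coeff_fiberSeries_eq_zero fun k hk => h ⟨k, hk⟩]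

/-- The bijection `v ↦ 3k/2 - v` for even `k` and `v ↦ v - (3k - 1)/2` for odd `k`: in both cases it
turns hexagonal numbers into a single polynomial in `k` and `v`, with constant term
`3 * pentagonal k`; see `natCast_hexagonal_hexagonalShear`. -/
def hexagonalShear (k : ℤ) : ℤ ≃ ℤ :=
  if Even k then Equiv.subLeft (3 * k / 2) else Equiv.subRight ((3 * k - 1) / 2)

theorem natCast_hexagonal_hexagonalShear (k v : ℤ) :
    (hexagonal (hexagonalShear k v) : ℤ) = 3 * pentagonal k + 2 * v ^ 2 + v - 6 * k * v := by
  have hpent := two_mul_natCast_pentagonal k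
  rw [natCast_hexagonal, hexagonalShear]
  split_ifs with hk
  · obtain ⟨j, rfl⟩ := hk
    rw [Equiv.subLeft_apply, show 3 * (j + j) / 2 = 3 * j by omega]
    linarith
  · obtain ⟨j, rfl⟩ := Int.not_even_iff_odd.1 hk
    rw [Equiv.subRight_apply, show (3 * (2 * j + 1) - 1) / 2 = 3 * j + 1 by omega]
    linarith

theorem finiteFibers_pentagonal : FiniteFibers pentagonal :=
  finiteFibers_of_injective pentagonal_injective

theorem finiteFibers_hexagonal : FiniteFibers hexagonal :=
  finiteFibers_of_injective hexagonal_injective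

theorem finiteFibers_pentagonal_add_hexagonalShear {a b : ℕ} (ha : a ≠ 0) (hb : b ≠ 0) :
    FiniteFibers fun p : ℤ × ℤ => a * pentagonal p.1 + b * hexagonal (hexagonalShear p.1 p.2) :=
  ((finiteFibers_pentagonal.const_mul ha).add (finiteFibers_hexagonal.const_mul hb)).comp_injective
    ((Equiv.refl ℤ).prodShear hexagonalShear).injective

theorem expand_pentagonalSeries_mul_expand_hexagonalSeries {a b : ℕ} (ha : a ≠ 0) (hb : b ≠ 0) :
    expand a ha f₁ * expand b hb hexagonalSeries =
      fiberSeries (ZMod 2) fun p : ℤ × ℤ =>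
        a * pentagonal p.1 + b * hexagonal (hexagonalShear p.1 p.2) := by
  rw [pentagonalSeries_eq_fiberSeries, hexagonalSeries, expand_fiberSeries, expand_fiberSeries,
    fiberSeries_mul (finiteFibers_pentagonal.const_mul ha) (finiteFibers_hexagonal.const_mul hb),
    ← fiberSeries_comp_equiv ((Equiv.refl ℤ).prodShear hexagonalShear)]
  rfl

theorem pentagonalSeries_pow_two_pow (k : ℕ) :
    f₁ ^ 2 ^ k = fiberSeries (ZMod 2) fun i => 2 ^ k * pentagonal i := by
  rw [pow_char_pow_eq_expand, pentagonalSeries_eq_fiberSeries, expand_fiberSeries]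

theorem fiberSeries_eq_pentagonalSeries_pow {w : ℤ × ℤ → ℕ} (hw : FiniteFibers w) {j : ℕ} {b : ℤ}
    (h : ∀ p, (w p : ℤ) = 2 ^ j * (4 * pentagonal p.1 + p.2 - 6 * p.1 * p.2) + b * p.2 ^ 2) :
    fiberSeries (ZMod 2) w = f₁ ^ 2 ^ (j + 2) := by
  rw [pentagonalSeries_pow_two_pow, fiberSeries_eq_of_involutive hw
    (σ := fun p => (p.1 - p.2, -p.2)) (f := fun k => (k, 0))]
  · congr! 2 with k
    zify
    rw [h]
    ring
  · rintro ⟨k, v⟩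
    simp
  · rintro ⟨k, v⟩
    zify
    simp only [h]
    linear_combination 2 ^ j * 2 *
      (two_mul_natCast_pentagonal (k - v) - two_mul_natCast_pentagonal k)
  · exact Prod.mk_left_injective 0
  · rintro ⟨k, v⟩
    simp only [Prod.mk.injEq, sub_eq_self, Set.mem_range]
    grind

theorem pentagonalSeries_mul_hexagonalSeries : f₁ * hexagonalSeries = f₁ ^ 2 ^ 2 := by
  have hprod := expand_pentagonalSeries_mul_expand_hexagonalSeries one_ne_zero one_ne_zero
  rw [expand_one_apply, expand_one_apply] at hprod
  rw [hprod]
  refine fiberSeries_eq_pentagonalSeries_pow (j := 0) (b := 2)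
    (finiteFibers_pentagonal_add_hexagonalShear one_ne_zero one_ne_zero) fun p => ?_
  push_cast [natCast_hexagonal_hexagonalShear]
  ring

theorem fiberSeries_hexagonalShear_even :
    (fiberSeries (ZMod 2) fun p : ℤ × ℤ =>
      5 * pentagonal p.1 + 1 * hexagonal (hexagonalShear p.1 (2 * p.2))) = f₁ ^ 2 ^ 3 := by
  have hinj : Function.Injective fun p : ℤ × ℤ => (p.1, 2 * p.2) := fun p q h => by
    rw [Prod.mk.injEq] at h
    exact Prod.ext h.1 (by omega)
  refine fiberSeries_eq_pentagonalSeries_pow (j := 1) (b := 8)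
    ((finiteFibers_pentagonal_add_hexagonalShear (by decide) one_ne_zero).comp_injective hinj)
    fun p => ?_
  push_cast [natCast_hexagonal_hexagonalShear]
  ring

theorem fiberSeries_hexagonalShear_odd :
    (fiberSeries (ZMod 2) fun p : ℤ × ℤ =>
      5 * pentagonal p.1 + 1 * hexagonal (hexagonalShear p.1 (2 * p.2 + 1))) =
      X * (expand 2 two_ne_zero f₁ * expand 10 (by decide) hexagonalSeries) := by
  let e : ℤ × ℤ ≃ ℤ × ℤ :=
    { toFun := fun p => (p.2 - 2 * p.1 + 1, p.2 - 3 * p.1 + 1)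
      invFun := fun p => (p.1 - p.2, 3 * p.1 - 2 * p.2 - 1)
      left_inv := fun p => by ext <;> ring
      right_inv := fun p => by ext <;> ring }
  rw [expand_pentagonalSeries_mul_expand_hexagonalSeries, X_mul_fiberSeries]
  refine Eq.trans ?_ (fiberSeries_comp_equiv e _)
  congr! 2 with ⟨k, w⟩
  zify
  simp only [e, Equiv.coe_fn_mk, natCast_hexagonal_hexagonalShear]
  linear_combination 4 * two_mul_natCast_pentagonal k -
    16 * two_mul_natCast_pentagonal (w - 2 * k + 1)

theorem expand_five_pentagonalSeries_mul_hexagonalSeries :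
    f₅ * hexagonalSeries =
      f₁ ^ 2 ^ 3 + X * (expand 2 two_ne_zero f₁ * expand 10 (by decide) hexagonalSeries) := by
  have hprod := expand_pentagonalSeries_mul_expand_hexagonalSeries (a := 5) (by decide) one_ne_zero
  rw [expand_one_apply] at hprod
  have hsplit : Function.Bijective (Sum.elim (fun p : ℤ × ℤ => (p.1, 2 * p.2))
      fun p : ℤ × ℤ => (p.1, 2 * p.2 + 1)) := by
    refine ⟨?_, fun ⟨k, v⟩ => ?_⟩
    · rintro (⟨k, v⟩ | ⟨k, v⟩) (⟨l, w⟩ | ⟨l, w⟩) <;>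
        simp only [Sum.elim_inl, Sum.elim_inr, Prod.mk.injEq, Sum.inl.injEq, Sum.inr.injEq,
          reduceCtorEq] <;> omega
    · obtain ⟨w, rfl | rfl⟩ := v.even_or_odd'
      exacts [⟨.inl (k, w), rfl⟩, ⟨.inr (k, w), rfl⟩]
  rw [hprod, ← fiberSeries_hexagonalShear_even, ← fiberSeries_hexagonalShear_odd]
  simpa only using fiberSeries_eq_add
    (finiteFibers_pentagonal_add_hexagonalShear (by decide) one_ne_zero) hsplit

theorem constantCoeff_pentagonalSeries : constantCoeff f₁ = 1 := by
  rw [← coeff_zero_eq_constantCoeff_apply]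
  exact (coeff_pentagonalSeries_pentagonal (ZMod 2) 0).trans (by simp)

theorem pentagonalSeries_ne_zero : f₁ ≠ 0 := fun h => by
  simpa [h] using constantCoeff_pentagonalSeries

theorem pentagonalSeries_pow_three : f₁ ^ 3 = hexagonalSeries :=
  mul_left_cancel₀ pentagonalSeries_ne_zero <| by
    rw [pentagonalSeries_mul_hexagonalSeries]; ring

theorem pentagonalSeries_mul_expand_five : f₁ * f₅ = f₁ ^ 6 + X * f₅ ^ 6 := by
  have hdouble : expand 2 two_ne_zero f₁ = f₁ ^ 2 := (pow_char_pow_eq_expand 2 1 _).symm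
  have hten : expand 10 (by decide) hexagonalSeries = f₅ ^ 6 := by
    have hsq : expand 2 two_ne_zero hexagonalSeries = hexagonalSeries ^ 2 :=
      (pow_char_pow_eq_expand 2 1 _).symm
    change _ = f₅ ^ (3 * 2)
    rw [pow_mul, ← map_pow, pentagonalSeries_pow_three, ← map_pow, ← hsq]
    exact expand_mul 5 (by decide) 2 two_ne_zero hexagonalSeries
  have h := expand_five_pentagonalSeries_mul_hexagonalSeries
  rw [hdouble, hten, ← pentagonalSeries_pow_three] at h
  refine mul_left_cancel₀ (pow_ne_zero 2 pentagonalSeries_ne_zero) ?_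
  linear_combination h

end Theta

section PartitionSeries

variable (R : Type*) [CommRing R]

/-- The generating function `∑ n, p(n) qⁿ` of the partition numbers. -/
noncomputable def partitionSeries : R⟦X⟧ :=
  fiberSeries R (Sigma.fst : (Σ k : ℕ, k.Partition) → ℕ)

/-- The generating function of the `m`-regular partitions. -/
noncomputable def regularPartitionSeries (m : ℕ) : R⟦X⟧ :=
  mk fun n => (numRegularPartitions m n : R)

variable {R}

theorem finiteFibers_sigma_fst : FiniteFibers (Sigma.fst : (Σ k : ℕ, k.Partition) → ℕ) := fun n =>
  Finite.of_equiv _ (Equiv.sigmaSubtype n).symm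

theorem partitionSeries_pow (t : ℕ) :
    partitionSeries R ^ t = mk fun n => (numMultipartitions t n : R) :=
  fiberSeries_pow finiteFibers_sigma_fst t

theorem coeff_partitionSeries (n : ℕ) :
    coeff n (partitionSeries R) = (Fintype.card n.Partition : R) := by
  rw [partitionSeries, coeff_fiberSeries, Nat.card_congr (Equiv.sigmaSubtype n),
    Nat.card_eq_fintype_card]

open scoped PowerSeries.WithPiTopology in
theorem partitionSeries_mul_pentagonalSeries :
    partitionSeries R * pentagonalSeries R = 1 := by
  let _ : TopologicalSpace R := ⊥
  have _ : DiscreteTopology R := ⟨rfl⟩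
  have hP : HasProd (fun i => ∑' j : ℕ, (X : R⟦X⟧) ^ ((i + 1) * j)) (partitionSeries R) := by
    convert! Nat.Partition.hasProd_powerSeriesMk_card_restricted R fun _ => True using 1
    ext n
    simp [coeff_partitionSeries, Nat.Partition.restricted]
  have hone (i : ℕ) : (∑' j : ℕ, (X : R⟦X⟧) ^ ((i + 1) * j)) * (1 - X ^ (i + 1)) = 1 := by
    simp_rw [pow_mul]
    exact WithPiTopology.tsum_pow_mul_one_sub_of_constantCoeff_eq_zero (by simp)
  refine (hP.mul (WithPiTopology.hasProd_one_sub_X_pow R)).unique ?_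
  simp only [hone]
  exact hasProd_one

theorem partitionSeries_pow_mul_pentagonalSeries_pow (n : ℕ) :
    partitionSeries R ^ n * pentagonalSeries R ^ n = 1 := by
  rw [← mul_pow, partitionSeries_mul_pentagonalSeries, one_pow]

theorem regularPartitionSeries_eq_mk_card_countRestricted {m : ℕ} (hm : 0 < m) :
    regularPartitionSeries R m =
      mk fun n => ((Nat.Partition.countRestricted n m).card : R) := by
  ext n
  rw [regularPartitionSeries, coeff_mk, coeff_mk,
    ← Nat.Partition.card_restricted_eq_card_countRestricted n hm, numRegularPartitions,
    Nat.card_eq_fintype_card, Fintype.card_subtype, Nat.Partition.restricted]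

open scoped PowerSeries.WithPiTopology in
theorem continuous_expand [TopologicalSpace R] {m : ℕ} (hm : m ≠ 0) :
    Continuous (expand m hm : R⟦X⟧ →ₐ[R] R⟦X⟧) := by
  have hcoeff (n : ℕ) : Continuous fun f : R⟦X⟧ => coeff n (expand m hm f) := by
    simp only [coeff_expand]
    split_ifs
    exacts [WithPiTopology.continuous_coeff R _, continuous_const]
  exact continuous_iff_continuousAt.2 fun f =>
    (WithPiTopology.tendsto_iff_coeff_tendsto _ _ _ _).2 fun n => (hcoeff n).continuousAt

open scoped PowerSeries.WithPiTopology in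
theorem regularPartitionSeries_mul_pentagonalSeries {m : ℕ} (hm : m ≠ 0) :
    regularPartitionSeries R m * pentagonalSeries R = expand m hm (pentagonalSeries R) := by
  let _ : TopologicalSpace R := ⊥
  have _ : DiscreteTopology R := ⟨rfl⟩
  have hpent := WithPiTopology.hasProd_one_sub_X_pow R
  have hreg := Nat.Partition.hasProd_powerSeriesMk_card_countRestricted R
    (Nat.pos_of_ne_zero hm)
  rw [← regularPartitionSeries_eq_mk_card_countRestricted (Nat.pos_of_ne_zero hm)] at hreg
  refine (hreg.mul hpent).unique ?_
  convert! hpent.map (expand m hm) (continuous_expand hm) using 1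
  ext1 i
  simp_rw [pow_mul]
  rw [geom_sum_mul_neg, Function.comp_apply, map_sub, map_one, map_pow, expand_X, ← pow_mul,
    ← pow_mul, mul_comm]

theorem regularPartitionSeries_eq {m : ℕ} (hm : m ≠ 0) :
    regularPartitionSeries R m = expand m hm (pentagonalSeries R) * partitionSeries R := by
  rw [← regularPartitionSeries_mul_pentagonalSeries, mul_assoc, mul_comm (pentagonalSeries R),
    partitionSeries_mul_pentagonalSeries, mul_one]

end PartitionSeries

local notation "p₁" => partitionSeries (ZMod 2)
local notation "p₅" => expand 5 (Nat.succ_ne_zero 4) p₁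
local notation "U" => multisection (R := ZMod 2) 5

section Quintisection

theorem multisection_one_pentagonalSeries : U 1 f₁ = f₅ := by
  rw [pentagonalSeries_eq_fiberSeries, expand_fiberSeries]
  refine multisection_fiberSeries (f := fun j => 1 - 5 * j) (by decide)
    (fun i j h => by grind) (fun j => ?_) fun k n hk => ?_
  · zify
    linarith [two_mul_natCast_pentagonal j, two_mul_natCast_pentagonal (1 - 5 * j)]
  · have hmod : ∀ x : ZMod 5, x * (3 * x - 1) = 2 → 1 - x = 0 := by decide
    have hzmod : ((1 - k : ℤ) : ZMod 5) = 0 := by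
      have hpent := congrArg (Int.cast : ℤ → ZMod 5) (two_mul_natCast_pentagonal k)
      have hfive : (5 : ZMod 5) = 0 := rfl
      rw [hk] at hpent
      push_cast at hpent ⊢
      exact hmod _ (by linear_combination 2 * n * hfive - hpent)
    obtain ⟨j, hj⟩ := (ZMod.intCast_zmod_eq_zero_iff_dvd _ 5).1 hzmod
    exact ⟨j, by push_cast at hj; linarith⟩

theorem multisection_pentagonalSeries_pow_sixteen {r : ℕ} (hr : r = 3 ∨ r = 4) :
    U r (f₁ ^ 2 ^ 4) = 0 := by
  ext n
  rw [coeff_multisection, pentagonalSeries_pow_two_pow]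
  refine coeff_fiberSeries_eq_zero fun k hk => ?_
  have hmod : ∀ x : ZMod 5, 8 * (x * (3 * x - 1)) ≠ 3 ∧ 8 * (x * (3 * x - 1)) ≠ 4 := by decide
  have hzmod : 8 * ((k : ZMod 5) * (3 * k - 1)) = r := by
    have hpent := congrArg (Int.cast : ℤ → ZMod 5) (two_mul_natCast_pentagonal k)
    have hk := congrArg (Nat.cast : ℕ → ZMod 5) hk
    have hfive : (5 : ZMod 5) = 0 := rfl
    push_cast at hpent hk
    linear_combination hk - 8 * hpent + n * hfive
  rcases hr with rfl | rfl
  exacts [(hmod k).1 hzmod, (hmod k).2 hzmod]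

theorem pentagonalSeries_mul_multisection_zero_pow_five :
    f₁ * U 0 (f₁ ^ 5) = U 0 (f₁ ^ 5) ^ 2 + X * f₁ ^ 6 * f₅ ^ 4 := by
  have hsq : U 0 (f₁ ^ 10) = U 0 (f₁ ^ 5) ^ 2 := by
    rw [show 10 = 5 * 2 ^ 1 by rfl, pow_mul, multisection_pow_char_pow (s := 0) (c := 0) 1
      (by decide) (by decide) (by decide), pow_zero, one_mul, pow_one]
  have hfour : U 4 (f₁ ^ 4) = f₅ ^ 4 := by
    change U 4 (f₁ ^ 2 ^ 2) = f₅ ^ 2 ^ 2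
    rw [multisection_pow_char_pow (s := 1) (c := 0) 2
      (by decide) (by decide) (by decide), multisection_one_pentagonalSeries, pow_zero, one_mul]
  have hsplit : f₅ * f₁ ^ 5 = f₁ ^ 10 + expand 5 (Nat.succ_ne_zero 4) (f₁ ^ 6) * (X * f₁ ^ 4) := by
    rw [map_pow]
    linear_combination f₁ ^ 4 * pentagonalSeries_mul_expand_five
  have hU := congrArg (U 0) hsplit
  rw [map_add, multisection_expand_mul _ (by decide), multisection_expand_mul _ (by decide), hsq,
    multisection_zero_X_mul, hfour] at hU
  linear_combination hU

theorem multisection_zero_pentagonalSeries_pow_five_mul : U 0 (f₁ ^ 5) * f₅ = f₁ ^ 6 := by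
  -- `U 0 (f₁ ^ 5) * f₅` and `f₁ ^ 6` are roots of `y² + f₁f₅y + Xf₁⁶f₅⁶`, whose other root `Xf₅⁶`
  -- has constant term zero.
  have hfactor : (U 0 (f₁ ^ 5) * f₅ - f₁ ^ 6) * (U 0 (f₁ ^ 5) * f₅ + f₁ ^ 6 - f₁ * f₅) = 0 := by
    linear_combination -f₅ ^ 2 * pentagonalSeries_mul_multisection_zero_pow_five +
      f₁ ^ 6 * pentagonalSeries_mul_expand_five
  have hne : U 0 (f₁ ^ 5) * f₅ + f₁ ^ 6 - f₁ * f₅ ≠ 0 := fun h => by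
    have hN : constantCoeff (U 0 (f₁ ^ 5)) = 1 := by
      rw [← coeff_zero_eq_constantCoeff_apply, coeff_multisection, mul_zero, zero_add,
        coeff_zero_eq_constantCoeff_apply, map_pow, constantCoeff_pentagonalSeries, one_pow]
    simpa [constantCoeff_pentagonalSeries, hN] using congrArg constantCoeff h
  exact sub_eq_zero.1 ((mul_eq_zero.1 hfactor).resolve_right hne)

theorem expand_five_partitionSeries_mul_pentagonalSeries : p₅ * f₅ = 1 := by
  rw [← map_mul, partitionSeries_mul_pentagonalSeries, map_one]

theorem powerSeries_two_eq_zero (R : Type*) [CommRing R] [CharP R 2] : (2 : R⟦X⟧) = 0 :=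
  (map_ofNat C 2).symm.trans (by rw [CharTwo.two_eq_zero, map_zero])

theorem X_mul_multisection_four_partitionSeries : X * U 4 p₁ = p₁ ^ 5 + p₅ := by
  have hinv := partitionSeries_mul_pentagonalSeries (R := ZMod 2)
  have hpow := partitionSeries_pow_mul_pentagonalSeries_pow (R := ZMod 2)
  have hsplit : f₅ = f₁ ^ 5 + expand 5 (Nat.succ_ne_zero 4) (f₁ ^ 6) * (X * p₁) := by
    rw [map_pow]
    linear_combination p₁ * pentagonalSeries_mul_expand_five + (f₁ ^ 5 - f₅) * hinv
  have hU := congrArg (U 0) hsplit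
  rw [map_add, multisection_zero_expand, multisection_expand_mul _ (by decide),
    multisection_zero_X_mul] at hU
  have hne : f₁ ^ 6 * f₅ ≠ 0 := mul_ne_zero (pow_ne_zero 6 pentagonalSeries_ne_zero)
    (right_ne_zero_of_mul_eq_one expand_five_partitionSeries_mul_pentagonalSeries)
  refine mul_left_cancel₀ hne ?_
  linear_combination -f₅ * hU - multisection_zero_pentagonalSeries_pow_five_mul -
    f₁ * f₅ * hpow 5 - f₁ ^ 6 * expand_five_partitionSeries_mul_pentagonalSeries -
    f₁ ^ 6 * powerSeries_two_eq_zero (ZMod 2)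

theorem X_mul_multisection_zero_partitionSeries_pow_five :
    X * U 0 (p₁ ^ 5) = p₁ ^ 25 + p₅ ^ 5 := by
  have hinv := partitionSeries_mul_pentagonalSeries (R := ZMod 2)
  have hpow := partitionSeries_pow_mul_pentagonalSeries_pow (R := ZMod 2)
  have hinv₅ := expand_five_partitionSeries_mul_pentagonalSeries
  have hinv₅_pow : p₅ ^ 5 * f₅ ^ 5 = 1 := by rw [← mul_pow, hinv₅, one_pow]
  have hfour : U 1 (p₁ ^ 4) = X ^ 3 * U 4 p₁ ^ 4 := by
    change U 1 (p₁ ^ 2 ^ 2) = X ^ 3 * U 4 p₁ ^ 2 ^ 2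
    rw [multisection_pow_char_pow (s := 4) (c := 3) 2 (by decide) (by decide) (by decide)]
  have hsplit : f₅ * p₁ ^ 4 = f₁ + expand 5 (Nat.succ_ne_zero 4) (f₁ ^ 6) * (X * p₁ ^ 5) := by
    rw [map_pow]
    linear_combination p₁ ^ 5 * pentagonalSeries_mul_expand_five - f₅ * p₁ ^ 4 * hinv + f₁ * hpow 5
  have hU := congrArg (U 1) hsplit
  rw [map_add, multisection_expand_mul _ (by decide), multisection_expand_mul _ (by decide),
    multisection_X_mul, hfour, multisection_one_pentagonalSeries] at hU
  have hbinom : (X * U 4 p₁) ^ 4 = p₁ ^ 20 + p₅ ^ 4 := by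
    rw [X_mul_multisection_four_partitionSeries]
    linear_combination (2 * p₁ ^ 15 * p₅ + 3 * p₁ ^ 10 * p₅ ^ 2 + 2 * p₁ ^ 5 * p₅ ^ 3) *
      powerSeries_two_eq_zero (ZMod 2)
  have hrest : p₁ ^ 5 * p₅ ^ 4 = p₅ ^ 5 + X * f₅ * p₁ ^ 6 := by
    linear_combination p₁ ^ 6 * p₅ ^ 5 * pentagonalSeries_mul_expand_five -
      p₁ ^ 5 * p₅ ^ 4 * (p₁ * f₁ * hinv₅ + hinv) + p₅ ^ 5 * hpow 6 + X * f₅ * p₁ ^ 6 * hinv₅_pow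
  linear_combination -X * p₁ ^ 6 * hU - X * U 0 (p₁ ^ 5) * hpow 6 + p₁ ^ 6 * f₁ * hbinom +
    p₁ ^ 5 * (p₁ ^ 20 + p₅ ^ 4) * hinv + hrest

theorem X_sq_mul_multisection_four_twice_partitionSeries :
    X ^ 2 * U 4 (U 4 p₁) = p₁ ^ 25 + p₅ ^ 5 + X * p₁ := by
  have h := congrArg (U 0) X_mul_multisection_four_partitionSeries
  rw [multisection_zero_X_mul, map_add, multisection_zero_expand] at h
  linear_combination X * h + X_mul_multisection_zero_partitionSeries_pow_five

end Quintisection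

section RegularPartitions

theorem X_sq_mul_multisection_four_twice_regularPartitionSeries (k : ℕ) :
    X ^ 2 * U 4 (U 4 (regularPartitionSeries (ZMod 2) (25 * 2 ^ k))) =
      f₁ ^ 2 ^ k * (p₁ ^ 25 + p₅ ^ 5 + X * p₁) := by
  have hexpand : expand (25 * 2 ^ k) (by positivity) f₁ =
      expand 5 (Nat.succ_ne_zero 4) (expand 5 (Nat.succ_ne_zero 4) (f₁ ^ 2 ^ k)) := by
    rw [pow_char_pow_eq_expand, ← expand_mul, ← expand_mul]
  rw [regularPartitionSeries_eq (by positivity), hexpand, multisection_expand_mul _ (by decide),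
    multisection_expand_mul _ (by decide), ← X_sq_mul_multisection_four_twice_partitionSeries]
  ring

theorem coeff_pentagonalSeries_pow_sixteen_mul_expand_five {m : ℕ} (hm : m % 5 = 3 ∨ m % 5 = 4)
    (f : (ZMod 2)⟦X⟧) :
    coeff m (f₁ ^ 2 ^ 4 * expand 5 (Nat.succ_ne_zero 4) f) = 0 := by
  rw [← Nat.div_add_mod m 5, ← coeff_multisection, mul_comm,
    multisection_expand_mul _ (Nat.mod_lt m (by decide)),
    multisection_pentagonalSeries_pow_sixteen hm, mul_zero, map_zero]

theorem coeff_pentagonalSeries_pow_fifteen {m : ℕ} (hm : m % 9 = 2 ∨ m % 9 = 8) :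
    coeff m (f₁ ^ 15) = 0 := by
  have hprod : f₁ ^ 15 = fiberSeries (ZMod 2) fun p : ℤ × ℤ =>
      hexagonal p.1 + 2 ^ 2 * hexagonal p.2 := by
    rw [← fiberSeries_mul finiteFibers_hexagonal (finiteFibers_hexagonal.const_mul (by decide)),
      ← expand_fiberSeries (by decide), ← hexagonalSeries, ← pow_char_pow_eq_expand 2 2,
      ← pentagonalSeries_pow_three]
    ring
  rw [hprod]
  refine coeff_fiberSeries_eq_zero fun ⟨a, b⟩ hab => ?_
  have hmod : ∀ x y : ZMod 9, x * (2 * x - 1) + 4 * (y * (2 * y - 1)) ≠ 2 ∧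
      x * (2 * x - 1) + 4 * (y * (2 * y - 1)) ≠ 8 := by decide
  have hzmod : (a : ZMod 9) * (2 * a - 1) + 4 * (b * (2 * b - 1)) = (m % 9 : ℕ) := by
    have ha := congrArg (Int.cast : ℤ → ZMod 9) (natCast_hexagonal a)
    have hb := congrArg (Int.cast : ℤ → ZMod 9) (natCast_hexagonal b)
    have hab := congrArg (Nat.cast : ℕ → ZMod 9) hab
    rw [ZMod.natCast_mod]
    push_cast at ha hb hab
    linear_combination hab - ha - 4 * hb
  rcases hm with hm | hm <;> rw [hm] at hzmod
  exacts [(hmod a b).1 hzmod, (hmod a b).2 hzmod]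

theorem numRegularPartitions_modEq_numMultipartitions {m : ℕ}
    (h5 : (m + 2) % 5 = 3 ∨ (m + 2) % 5 = 4) (h9 : (m + 1) % 9 = 2 ∨ (m + 1) % 9 = 8) :
    numRegularPartitions 400 (25 * m + 24) ≡ numMultipartitions 9 (m + 2) [MOD 2] := by
  have hinv := partitionSeries_pow_mul_pentagonalSeries_pow (R := ZMod 2)
  have hseries : X ^ 2 * U 4 (U 4 (regularPartitionSeries (ZMod 2) (25 * 2 ^ 4))) =
      p₁ ^ 9 + f₁ ^ 2 ^ 4 * expand 5 (Nat.succ_ne_zero 4) (p₁ ^ 5) + X * f₁ ^ 15 := by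
    rw [X_sq_mul_multisection_four_twice_regularPartitionSeries, map_pow]
    linear_combination p₁ ^ 9 * hinv 16 + X * f₁ ^ 15 * hinv 1
  have hcoeff := congrArg (coeff (m + 2)) hseries
  rw [map_add, map_add, coeff_X_pow_mul, coeff_multisection, coeff_multisection,
    coeff_pentagonalSeries_pow_sixteen_mul_expand_five h5, coeff_succ_X_mul,
    coeff_pentagonalSeries_pow_fifteen h9, add_zero, add_zero, partitionSeries_pow,
    regularPartitionSeries, coeff_mk, coeff_mk, ZMod.natCast_eq_natCast_iff] at hcoeff
  rwa [show 25 * m + 24 = 5 * (5 * m + 4) + 4 by ring]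

end RegularPartitions

theorem stmt_10 (n : ℕ) :
    (∀ B ∈ ({3, 9, 18, 39} : Finset ℕ),
      numRegularPartitions 400 (1125 * n + 25 * B - 26) ≡
        numMultipartitions 9 (45 * n + B) [MOD 2]) := by
  intro B hB
  simp only [Finset.mem_insert, Finset.mem_singleton] at hB
  obtain ⟨m, hm⟩ : ∃ m, 45 * n + B = m + 2 := ⟨45 * n + B - 2, by omega⟩
  have hreg : 1125 * n + 25 * B - 26 = 25 * m + 24 := by omega
  rw [hm, hreg]
  exact numRegularPartitions_modEq_numMultipartitions (by omega) (by omega)
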